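/- Let n, d, m ≥ 1 and B ≥ 1. Let x_1, …, x_n ∈ ℝ^d with ‖x_i‖₂ ≤ 1 for all i, let y_1, …, y_n ∈ ℝ^d, let a ∈ {−1,+1}^m, and let W ∈ ℝ^{d×m} with columns w_r satisfy |⟨w_r, x_i⟩| ≤ B for all r ∈ [m], i ∈ [n] and |W_{k,r}| ≤ B for all k ∈ [d], r ∈ [m]. Then for every r ∈ [m], the gradient vector satisfies ‖Δw_r‖₂ ≤ √n·d·exp(11B)·‖F − Y‖_F, where F − Y is the d×n matrix with entries F(W,x_i,a)_k − y_{k,i} and ‖·‖_F is the Frobenius norm. -/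

import Mathlib

/-! The vector `Δw_r` is a sum over pairs `(i, k)` of `m (F_{k,i} - y_{k,i})` times
`⟨v_{k,r}, S_i⟩ S_{i,r} x_i + a_r S_{i,r} e_k`. All exponents `⟨w_ρ, x_i⟩` lie in `[-B, B]`, so
`m S_{i,r} ≤ exp (2B)` (`card_mul_softS_le`); since `S_i` is a probability vector and the entries of
`v_{k,r}` are at most `2B` in absolute value, `|⟨v_{k,r}, S_i⟩| ≤ 2B` (`abs_vKR_softS_le`).
The triangle inequality bounds `‖Δw_r‖` by `(2B + 1) exp (2B) ∑ |F_{k,i} - y_{k,i}|`, where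
`2B + 1 ≤ exp (2B)`, and Cauchy–Schwarz bounds the last sum by `√(n d) ‖F - Y‖_F`. -/

/-- The softmax vector of `x` with respect to the columns of `W`:
`S(W,x)_r = exp⟨w_r,x⟩ / Σ_ρ exp⟨w_ρ,x⟩`. -/
noncomputable def softS {d m : ℕ} (W : Fin d → Fin m → ℝ) (x : Fin d → ℝ) (r : Fin m) : ℝ :=
  Real.exp (∑ k, W k r * x k) / ∑ ρ, Real.exp (∑ k, W k ρ * x k)

/-- `v_{k,r}(W)_ρ = β_k(W)_r − β_k(W)_ρ` where `β_k(W)_ρ = W_{k,ρ}·a_ρ`. -/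
noncomputable def vKR {d m : ℕ} (W : Fin d → Fin m → ℝ) (a : Fin m → ℝ)
    (k : Fin d) (r ρ : Fin m) : ℝ :=
  W k r * a r - W k ρ * a ρ

/-- The model `F(W,x,a)_k = m·⟨β_k(W), S(W,x)⟩`. -/
noncomputable def modelF {d m : ℕ} (W : Fin d → Fin m → ℝ) (x : Fin d → ℝ)
    (a : Fin m → ℝ) (k : Fin d) : ℝ :=
  (m : ℝ) * ∑ r, (W k r * a r) * softS W x r

/-- The NTK matrix: for `p = (k₁, i)` and `q = (k₂, j)`,
`H(W)_{p,q} = m·(x_i⊤x_j)·Σ_r ⟨v_{k₁,r},S_i⟩·S_{i,r}·⟨v_{k₂,r},S_j⟩·S_{j,r}`. -/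
noncomputable def ntkH {n d m : ℕ} (W : Fin d → Fin m → ℝ) (a : Fin m → ℝ)
    (x : Fin n → Fin d → ℝ) (p q : Fin d × Fin n) : ℝ :=
  (m : ℝ) * (∑ l, x p.2 l * x q.2 l) *
    ∑ r, (∑ ρ, vKR W a p.1 r ρ * softS W (x p.2) ρ) * softS W (x p.2) r *
      ((∑ ρ, vKR W a q.1 r ρ * softS W (x q.2) ρ) * softS W (x q.2) r)

lemma softS_nonneg {d m : ℕ} (W : Fin d → Fin m → ℝ) (x : Fin d → ℝ) (r : Fin m) :
    0 ≤ softS W x r := by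
  unfold softS
  positivity

lemma sum_softS {d m : ℕ} (hm : 1 ≤ m) (W : Fin d → Fin m → ℝ) (x : Fin d → ℝ) :
    ∑ r, softS W x r = 1 := by
  have : Nonempty (Fin m) := ⟨⟨0, hm⟩⟩
  unfold softS
  rw [← Finset.sum_div]
  exact div_self (Finset.sum_pos (fun _ _ => Real.exp_pos _) Finset.univ_nonempty).ne'

lemma card_mul_softS_le {d m : ℕ} (W : Fin d → Fin m → ℝ) (x : Fin d → ℝ) (B : ℝ)
    (h : ∀ r, |∑ k, W k r * x k| ≤ B) (r : Fin m) :
    (m : ℝ) * softS W x r ≤ Real.exp (2 * B) := by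
  have hlow : (m : ℝ) * Real.exp (-B) ≤ ∑ ρ, Real.exp (∑ k, W k ρ * x k) := by
    have := Finset.card_nsmul_le_sum Finset.univ (fun ρ => Real.exp (∑ k, W k ρ * x k))
      (Real.exp (-B)) (fun ρ _ => Real.exp_le_exp.2 (abs_le.1 (h ρ)).1)
    simpa using this
  have hpos : 0 < ∑ ρ, Real.exp (∑ k, W k ρ * x k) :=
    Finset.sum_pos (fun _ _ => Real.exp_pos _) ⟨r, Finset.mem_univ r⟩
  unfold softS
  rw [← mul_div_assoc, div_le_iff₀ hpos]
  calc (m : ℝ) * Real.exp (∑ k, W k r * x k)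
      ≤ (m : ℝ) * Real.exp B := by
        gcongr
        exact (abs_le.1 (h r)).2
    _ = Real.exp (2 * B) * ((m : ℝ) * Real.exp (-B)) := by
        rw [mul_left_comm, ← Real.exp_add]
        ring_nf
    _ ≤ _ := by gcongr

lemma abs_vKR_softS_le {d m : ℕ} (hm : 1 ≤ m) (W : Fin d → Fin m → ℝ) (x : Fin d → ℝ)
    (a : Fin m → ℝ) (ha : ∀ r, |a r| = 1) (B : ℝ) (hWb : ∀ k r, |W k r| ≤ B)
    (k : Fin d) (r : Fin m) :
    |∑ ρ, vKR W a k r ρ * softS W x ρ| ≤ 2 * B := by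
  have hv : ∀ ρ, |vKR W a k r ρ| ≤ 2 * B := fun ρ => by
    have h1 := abs_sub (W k r * a r) (W k ρ * a ρ)
    rw [abs_mul, abs_mul, ha, ha] at h1
    unfold vKR
    linarith [hWb k r, hWb k ρ]
  calc |∑ ρ, vKR W a k r ρ * softS W x ρ|
      ≤ ∑ ρ, |vKR W a k r ρ * softS W x ρ| := Finset.abs_sum_le_sum_abs _ _
    _ ≤ ∑ ρ, 2 * B * softS W x ρ := by
        gcongr with ρ
        rw [abs_mul, abs_of_nonneg (softS_nonneg W x ρ)]
        exact mul_le_mul_of_nonneg_right (hv ρ) (softS_nonneg W x ρ)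
    _ = 2 * B := by rw [← Finset.mul_sum, sum_softS hm, mul_one]

lemma sum_abs_le_sqrt {n d : ℕ} (E : Fin d → Fin n → ℝ) :
    ∑ i, ∑ k, |E k i| ≤ Real.sqrt n * Real.sqrt d * Real.sqrt (∑ k, ∑ i, (E k i) ^ 2) := by
  rw [← Real.sqrt_mul (Nat.cast_nonneg n), ← Real.sqrt_mul (by positivity)]
  apply Real.le_sqrt_of_sq_le
  have h := sq_sum_le_card_mul_sum_sq (s := (Finset.univ : Finset (Fin n × Fin d)))
    (f := fun p => |E p.2 p.1|)
  simp only [sq_abs, Fintype.sum_prod_type, Finset.card_univ, Fintype.card_prod,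
    Fintype.card_fin, Nat.cast_mul] at h
  rwa [Finset.sum_comm (f := fun k i => (E k i) ^ 2)]

/-- Gradient norm bound:
`‖Δw_r‖₂ ≤ √n·d·exp(11B)·‖F − Y‖_F` for every `r`, where
`Δw_r = m·Σ_i Σ_k (F_{k,i} − y_{k,i})·(⟨v_{k,r},S_i⟩·S_{i,r}·x_i + a_r·S_{i,r}·e_k)`. -/
theorem stmt_11 (n d m : ℕ) (hn : 1 ≤ n) (hd : 1 ≤ d) (hm : 1 ≤ m) (B : ℝ) (hB : 1 ≤ B)
    (x y : Fin n → Fin d → ℝ) (hx : ∀ i, Real.sqrt (∑ l, (x i l) ^ 2) ≤ 1)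
    (a : Fin m → ℝ) (ha : ∀ r, a r = 1 ∨ a r = -1)
    (W : Fin d → Fin m → ℝ)
    (hWx : ∀ r i, |∑ k, W k r * x i k| ≤ B)
    (hWb : ∀ k r, |W k r| ≤ B) :
    ∀ r : Fin m,
      Real.sqrt (∑ c, ((m : ℝ) * ∑ i, ∑ k, (modelF W (x i) a k - y i k) *
            ((∑ ρ, vKR W a k r ρ * softS W (x i) ρ) * softS W (x i) r * x i c
              + a r * softS W (x i) r * (if c = k then (1 : ℝ) else 0))) ^ 2)
        ≤ Real.sqrt n * d * Real.exp (11 * B) *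
            Real.sqrt (∑ k, ∑ i, (modelF W (x i) a k - y i k) ^ 2) := by
  intro r
  have ha1 : ∀ r, |a r| = 1 := fun r => by rcases ha r with h | h <;> simp [h]
  set E : Fin d → Fin n → ℝ := fun k i => modelF W (x i) a k - y i k with hE
  set α : Fin n → Fin d → ℝ := fun i k => ∑ ρ, vKR W a k r ρ * softS W (x i) ρ with hα
  set V : Fin n → Fin d → EuclideanSpace ℝ (Fin d) := fun i k =>
    ((m : ℝ) * softS W (x i) r * E k i) •
      (α i k • WithLp.toLp 2 (x i) + a r • EuclideanSpace.single k (1 : ℝ)) with hV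
  have hnorm : Real.sqrt (∑ c, ((m : ℝ) * ∑ i, ∑ k, E k i *
      (α i k * softS W (x i) r * x i c
        + a r * softS W (x i) r * (if c = k then (1 : ℝ) else 0))) ^ 2)
      = ‖∑ i, ∑ k, V i k‖ := by
    rw [EuclideanSpace.norm_eq]
    congr 1
    refine Finset.sum_congr rfl fun c _ => ?_
    rw [Real.norm_eq_abs, sq_abs]
    congr 1
    simp only [hV, WithLp.ofLp_sum, Finset.sum_apply, Finset.mul_sum, PiLp.smul_apply,
      PiLp.add_apply, smul_eq_mul, PiLp.single_apply]
    refine Finset.sum_congr rfl fun i _ => Finset.sum_congr rfl fun k _ => ?_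
    ring
  have hxn : ∀ i, ‖(WithLp.toLp 2 (x i) : EuclideanSpace ℝ (Fin d))‖ ≤ 1 := fun i => by
    rw [EuclideanSpace.norm_eq]
    simpa using hx i
  have hterm : ∀ i k, ‖V i k‖ ≤ Real.exp (11 * B) * |E k i| := fun i k => by
    have hS := card_mul_softS_le W (x i) B (fun r => hWx r i) r
    have hS0 : 0 ≤ (m : ℝ) * softS W (x i) r := mul_nonneg m.cast_nonneg (softS_nonneg _ _ _)
    have hα1 : |α i k| ≤ 2 * B := abs_vKR_softS_le hm W (x i) a ha1 B hWb k r
    have hvec : ‖α i k • (WithLp.toLp 2 (x i) : EuclideanSpace ℝ (Fin d))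
        + a r • EuclideanSpace.single k (1 : ℝ)‖ ≤ Real.exp (2 * B) := by
      refine (norm_add_le _ _).trans ?_
      rw [norm_smul, norm_smul, Real.norm_eq_abs, Real.norm_eq_abs, ha1]
      have h1 : |α i k| * ‖(WithLp.toLp 2 (x i) : EuclideanSpace ℝ (Fin d))‖ ≤ 2 * B :=
        (mul_le_of_le_one_right (abs_nonneg _) (hxn i)).trans hα1
      have h2 : ‖EuclideanSpace.single k (1 : ℝ)‖ = 1 := by simp
      rw [h2]
      linarith [Real.add_one_le_exp (2 * B)]
    simp only [hV]
    rw [norm_smul, Real.norm_eq_abs, abs_mul, abs_of_nonneg hS0]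
    calc (m : ℝ) * softS W (x i) r * |E k i| * _
        ≤ Real.exp (2 * B) * |E k i| * Real.exp (2 * B) := by gcongr
      _ = Real.exp (4 * B) * |E k i| := by
          rw [mul_right_comm, ← Real.exp_add]
          ring_nf
      _ ≤ Real.exp (11 * B) * |E k i| := by
          gcongr
          norm_num
  have hd1 : Real.sqrt d ≤ d := by
    have : (1 : ℝ) ≤ d := by exact_mod_cast hd
    rw [Real.sqrt_le_left (by positivity)]
    nlinarith
  calc _ = ‖∑ i, ∑ k, V i k‖ := hnorm
    _ ≤ ∑ i, ∑ k, ‖V i k‖ :=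
        (norm_sum_le _ _).trans (Finset.sum_le_sum fun i _ => norm_sum_le _ _)
    _ ≤ ∑ i, ∑ k, Real.exp (11 * B) * |E k i| :=
        Finset.sum_le_sum fun i _ => Finset.sum_le_sum fun k _ => hterm i k
    _ = Real.exp (11 * B) * ∑ i, ∑ k, |E k i| := by simp only [Finset.mul_sum]
    _ ≤ Real.exp (11 * B) *
          (Real.sqrt n * Real.sqrt d * Real.sqrt (∑ k, ∑ i, (E k i) ^ 2)) := by
        gcongr
        exact sum_abs_le_sqrt E
    _ ≤ Real.exp (11 * B) * (Real.sqrt n * d * Real.sqrt (∑ k, ∑ i, (E k i) ^ 2)) := by gcongr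
    _ = _ := by ring
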